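/- arXiv:2502.00958 — 2 statements merged into one kernel-verified Lean document; each statement's English description precedes it below -/
import Mathlib

section
/- Let n ≥ 3, let μ ∈ Δ_n have full support, let σ : [0,∞) → ℝ be strictly concave and differentiable with σ(1) = 0, let E₁ and E₂ be disjoint nonempty subsets of {1,…,n} with E₁ ∪ E₂ ≠ {1,…,n}, and let α₁, α₂ ∈ (0,1) with α₁ + α₂ < 1. Then the unique minimizer of the Bayesian divergence d_μ(π) = −Σ_{i=1}^n μ_i σ(π_i/μ_i) over {π ∈ Δ_n : π(E₁) = α₁ and π(E₂) = α₂} is π* given by π*_i = α₁ μ_i/μ(E₁) for i ∈ E₁, π*_i = α₂ μ_i/μ(E₂) for i ∈ E₂, and π*_i = (1−α₁−α₂) μ_i/(1−μ(E₁∪E₂)) otherwise; moreover the minimum value equals −[μ(E₁)σ(α₁/μ(E₁)) + μ(E₂)σ(α₂/μ(E₂)) + (1−μ(E₁∪E₂))σ((1−α₁−α₂)/(1−μ(E₁∪E₂)))]. -/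
open Finset

/-!
Lumping the points of each cell of a partition together sends `μ` and `π` to their vectors of cell
masses. By Jensen's inequality on each cell, lumping cannot increase the divergence, and it
preserves the divergence only if `π / μ` is constant on every cell. When the cell masses of `π` are
prescribed the lumped divergence is a fixed number, so it is the minimum, attained exactly at the
rescaling of `μ` on each cell to its prescribed mass. Two disjoint events and the complement of
their union form such a partition.
-/

section WeightedJensen

variable {ι : Type*} {S : Finset ι} {s : Set ℝ} {σ : ℝ → ℝ} {μ π : ι → ℝ}

lemma sum_div_smul (S : Finset ι) (w f : ι → ℝ) (m : ℝ) :
    ∑ i ∈ S, (w i / m) • f i = (∑ i ∈ S, w i * f i) / m := by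
  simp only [smul_eq_mul, div_mul_eq_mul_div, sum_div]

lemma sum_mul_div_cancel (hμ : ∀ i ∈ S, 0 < μ i) :
    ∑ i ∈ S, μ i * (π i / μ i) = ∑ i ∈ S, π i :=
  sum_congr rfl fun i hi => mul_div_cancel₀ _ (hμ i hi).ne'

lemma sum_mul_map_div_le (hσ : ConcaveOn ℝ s σ) (hμ : ∀ i ∈ S, 0 < μ i)
    (hs : ∀ i ∈ S, π i / μ i ∈ s) :
    ∑ i ∈ S, μ i * σ (π i / μ i) ≤
      (∑ i ∈ S, μ i) * σ ((∑ i ∈ S, π i) / ∑ i ∈ S, μ i) := by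
  obtain rfl | hS := S.eq_empty_or_nonempty
  · simp
  have hm : 0 < ∑ i ∈ S, μ i := sum_pos hμ hS
  have jensen := hσ.le_map_sum (fun i hi => (div_pos (hμ i hi) hm).le)
    (by rw [← sum_div, div_self hm.ne']) hs
  rwa [sum_div_smul, sum_div_smul, sum_mul_div_cancel hμ, div_le_iff₀' hm] at jensen

lemma sum_mul_map_div_lt (hσ : StrictConcaveOn ℝ s σ) (hμ : ∀ i ∈ S, 0 < μ i)
    (hs : ∀ i ∈ S, π i / μ i ∈ s)
    (hne : ∃ i ∈ S, π i / μ i ≠ (∑ i ∈ S, π i) / ∑ i ∈ S, μ i) :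
    ∑ i ∈ S, μ i * σ (π i / μ i) <
      (∑ i ∈ S, μ i) * σ ((∑ i ∈ S, π i) / ∑ i ∈ S, μ i) := by
  have hm : 0 < ∑ i ∈ S, μ i := sum_pos hμ (hne.imp fun _ => And.left)
  have jensen := hσ.lt_map_sum_iff_of_pos' (fun i hi => div_pos (hμ i hi) hm)
    (by rw [← sum_div, div_self hm.ne']) hs
  rw [sum_div_smul, sum_div_smul, sum_mul_div_cancel hμ, div_lt_iff₀' hm] at jensen
  exact jensen.2 hne

end WeightedJensen

section Partition

variable {ι κ : Type*} [Fintype ι] [DecidableEq κ]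

/-- The Bayesian divergence `d_μ(π)` with generator `σ` and prior `μ`. -/
noncomputable def bayesDivergence (σ : ℝ → ℝ) (μ π : ι → ℝ) : ℝ :=
  -∑ i, μ i * σ (π i / μ i)

/-- The vector of cell masses of `π`: the pushforward of `π` along `c`, where `c i` is the cell
containing `i`. Partitions are encoded by such maps. -/
def cellMass (c : ι → κ) (π : ι → ℝ) (k : κ) : ℝ :=
  ∑ i with c i = k, π i

/-- The nonnegative vectors whose cell masses are prescribed by `α`. -/
def prescribedMass (c : ι → κ) (α : κ → ℝ) : Set (ι → ℝ) :=
  {π | (∀ i, 0 ≤ π i) ∧ cellMass c π = α}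

/-- Jeffrey's update of the prior `μ`: each cell is rescaled to its prescribed mass, keeping the
proportions of `μ` within the cell. -/
noncomputable def jeffreyUpdate (c : ι → κ) (μ : ι → ℝ) (α : κ → ℝ) (i : ι) : ℝ :=
  α (c i) * μ i / cellMass c μ (c i)

variable {c : ι → κ} {σ : ℝ → ℝ} {μ π : ι → ℝ} {α : κ → ℝ}

lemma sum_cellMass [Fintype κ] (c : ι → κ) (π : ι → ℝ) : ∑ k, cellMass c π k = ∑ i, π i :=
  sum_fiberwise univ c π

lemma cellMass_pos (hμ : ∀ i, 0 < μ i) (hc : Function.Surjective c) (k : κ) :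
    0 < cellMass c μ k := by
  obtain ⟨i, rfl⟩ := hc k
  exact sum_pos (fun j _ => hμ j) ⟨i, by simp⟩

lemma jeffreyUpdate_nonneg (hμ : ∀ i, 0 ≤ μ i) (hα : ∀ k, 0 ≤ α k) (i : ι) :
    0 ≤ jeffreyUpdate c μ α i :=
  div_nonneg (mul_nonneg (hα _) (hμ i)) (sum_nonneg fun j _ => hμ j)

lemma jeffreyUpdate_div (hμ : ∀ i, 0 < μ i) (i : ι) :
    jeffreyUpdate c μ α i / μ i = α (c i) / cellMass c μ (c i) := by
  rw [jeffreyUpdate, div_right_comm, mul_div_cancel_right₀ _ (hμ i).ne']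

lemma cellMass_jeffreyUpdate (hμ : ∀ i, 0 < μ i) (hc : Function.Surjective c) :
    cellMass c (jeffreyUpdate c μ α) = α := by
  funext k
  calc cellMass c (jeffreyUpdate c μ α) k
      = ∑ i with c i = k, α k * μ i / cellMass c μ k :=
        sum_congr rfl fun i hi => by rw [jeffreyUpdate, (mem_filter.1 hi).2]
    _ = α k * cellMass c μ k / cellMass c μ k := by rw [← sum_div, ← mul_sum, cellMass]
    _ = α k := mul_div_cancel_right₀ _ (cellMass_pos hμ hc k).ne'

lemma jeffreyUpdate_mem_prescribedMass (hμ : ∀ i, 0 < μ i) (hc : Function.Surjective c)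
    (hα : ∀ k, 0 ≤ α k) : jeffreyUpdate c μ α ∈ prescribedMass c α :=
  ⟨jeffreyUpdate_nonneg (fun i => (hμ i).le) hα, cellMass_jeffreyUpdate hμ hc⟩

variable [Fintype κ]

lemma bayesDivergence_jeffreyUpdate (hμ : ∀ i, 0 < μ i) :
    bayesDivergence σ μ (jeffreyUpdate c μ α) = bayesDivergence σ (cellMass c μ) α := by
  unfold bayesDivergence
  rw [neg_inj, ← sum_fiberwise univ c]
  refine sum_congr rfl fun k _ => ?_
  rw [cellMass, sum_mul]
  refine sum_congr rfl fun i hi => ?_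
  rw [jeffreyUpdate_div hμ, (mem_filter.1 hi).2, cellMass]

lemma bayesDivergence_cellMass_lt (hσ : StrictConcaveOn ℝ (Set.Ici 0) σ) (hμ : ∀ i, 0 < μ i)
    (hπ : ∀ i, 0 ≤ π i) (hne : π ≠ jeffreyUpdate c μ (cellMass c π)) :
    bayesDivergence σ (cellMass c μ) (cellMass c π) < bayesDivergence σ μ π := by
  have ratio_mem : ∀ i, π i / μ i ∈ Set.Ici 0 := fun i => div_nonneg (hπ i) (hμ i).le
  obtain ⟨i, hi⟩ := Function.ne_iff.1 hne
  have ratio_ne : π i / μ i ≠ cellMass c π (c i) / cellMass c μ (c i) := by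
    rw [← jeffreyUpdate_div hμ]
    exact fun h => hi ((div_left_inj' (hμ i).ne').1 h)
  unfold bayesDivergence
  rw [neg_lt_neg_iff, ← sum_fiberwise univ c]
  refine sum_lt_sum (fun k _ => ?_) ⟨c i, mem_univ _, ?_⟩
  · exact sum_mul_map_div_le hσ.concaveOn (fun j _ => hμ j) fun j _ => ratio_mem j
  · exact sum_mul_map_div_lt hσ (fun j _ => hμ j) (fun j _ => ratio_mem j) ⟨i, by simp, ratio_ne⟩

theorem stmt1_general (hμ : ∀ i, 0 < μ i) (hσ : StrictConcaveOn ℝ (Set.Ici 0) σ)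
    (hc : Function.Surjective c) (hα : ∀ k, 0 ≤ α k) :
    (jeffreyUpdate c μ α ∈ prescribedMass c α ∧
      ∀ π ∈ prescribedMass c α, π ≠ jeffreyUpdate c μ α →
        bayesDivergence σ μ (jeffreyUpdate c μ α) < bayesDivergence σ μ π) ∧
    bayesDivergence σ μ (jeffreyUpdate c μ α) = bayesDivergence σ (cellMass c μ) α := by
  refine ⟨⟨jeffreyUpdate_mem_prescribedMass hμ hc hα, ?_⟩, bayesDivergence_jeffreyUpdate hμ⟩
  rintro π ⟨hπ, rfl⟩ hne
  rw [bayesDivergence_jeffreyUpdate hμ]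
  exact bayesDivergence_cellMass_lt hσ hμ hπ hne

end Partition

section TwoEvents

variable {ι : Type*} [DecidableEq ι] {E₁ E₂ : Finset ι}

/-- The partition into `E₁`, `E₂` and the rest, as a map to the index of the cell. A point of
`E₁ ∩ E₂` is put into the first cell. -/
def eventCell (E₁ E₂ : Finset ι) (i : ι) : Fin 3 :=
  if i ∈ E₁ then 0 else if i ∈ E₂ then 1 else 2

lemma eventCell_eq_zero_iff {i : ι} : eventCell E₁ E₂ i = 0 ↔ i ∈ E₁ := by
  by_cases h₁ : i ∈ E₁ <;> by_cases h₂ : i ∈ E₂ <;> simp [eventCell, h₁, h₂]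

lemma eventCell_eq_one_iff (hdisj : Disjoint E₁ E₂) {i : ι} :
    eventCell E₁ E₂ i = 1 ↔ i ∈ E₂ := by
  by_cases h₁ : i ∈ E₁
  · simp [eventCell, h₁, disjoint_left.1 hdisj h₁]
  · by_cases h₂ : i ∈ E₂ <;> simp [eventCell, h₁, h₂]

variable [Fintype ι]

lemma eventCell_surjective (hE₁ : E₁.Nonempty) (hE₂ : E₂.Nonempty) (hdisj : Disjoint E₁ E₂)
    (hunion : E₁ ∪ E₂ ≠ univ) : Function.Surjective (eventCell E₁ E₂) := by
  obtain ⟨i₁, h₁⟩ := hE₁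
  obtain ⟨i₂, h₂⟩ := hE₂
  obtain ⟨i₃, h₃⟩ : ∃ i, i ∉ E₁ ∪ E₂ := by simpa [eq_univ_iff_forall] using hunion
  rw [notMem_union] at h₃
  intro k
  fin_cases k
  exacts [⟨i₁, eventCell_eq_zero_iff.2 h₁⟩, ⟨i₂, (eventCell_eq_one_iff hdisj).2 h₂⟩,
    ⟨i₃, by simp [eventCell, h₃]⟩]

lemma cellMass_eventCell (hdisj : Disjoint E₁ E₂) (π : ι → ℝ) :
    cellMass (eventCell E₁ E₂) π =
      ![∑ i ∈ E₁, π i, ∑ i ∈ E₂, π i, ∑ i, π i - ∑ i ∈ E₁ ∪ E₂, π i] := by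
  have mass₁ : cellMass (eventCell E₁ E₂) π 0 = ∑ i ∈ E₁, π i := by
    simp only [cellMass, eventCell_eq_zero_iff, filter_univ_mem]
  have mass₂ : cellMass (eventCell E₁ E₂) π 1 = ∑ i ∈ E₂, π i := by
    simp only [cellMass, eventCell_eq_one_iff hdisj, filter_univ_mem]
  have mass₃ : cellMass (eventCell E₁ E₂) π 2 = ∑ i, π i - ∑ i ∈ E₁ ∪ E₂, π i := by
    rw [← sum_cellMass (eventCell E₁ E₂), Fin.sum_univ_three, mass₁, mass₂, sum_union hdisj,
      add_sub_cancel_left]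
  funext k
  fin_cases k
  exacts [mass₁, mass₂, mass₃]

lemma prescribedMass_eventCell (hdisj : Disjoint E₁ E₂) (m α₁ α₂ : ℝ) :
    prescribedMass (eventCell E₁ E₂) ![α₁, α₂, m - α₁ - α₂] =
      {π | (∀ i, 0 ≤ π i) ∧ ∑ i, π i = m ∧ ∑ i ∈ E₁, π i = α₁ ∧ ∑ i ∈ E₂, π i = α₂} := by
  ext π
  rw [prescribedMass, Set.mem_ofPred_eq, Set.mem_ofPred_eq, cellMass_eventCell hdisj,
    sum_union hdisj, Matrix.vecCons_inj, Matrix.vecCons_inj, Matrix.vecCons_inj]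
  refine and_congr_right fun _ => ⟨?_, ?_⟩
  · rintro ⟨h₁, h₂, h₃, -⟩
    exact ⟨by linarith, h₁, h₂⟩
  · rintro ⟨rfl, rfl, rfl⟩
    exact ⟨rfl, rfl, (sub_sub _ _ _).symm, rfl⟩

lemma jeffreyUpdate_eventCell (hdisj : Disjoint E₁ E₂) (μ : ι → ℝ) (α₁ α₂ α₃ : ℝ) :
    jeffreyUpdate (eventCell E₁ E₂) μ ![α₁, α₂, α₃] = fun i =>
      if i ∈ E₁ then α₁ * μ i / ∑ j ∈ E₁, μ j
      else if i ∈ E₂ then α₂ * μ i / ∑ j ∈ E₂, μ j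
      else α₃ * μ i / (∑ j, μ j - ∑ j ∈ E₁ ∪ E₂, μ j) := by
  funext i
  rw [jeffreyUpdate, cellMass_eventCell hdisj, eventCell]
  split_ifs <;> rfl

lemma bayesDivergence_fin_three (σ : ℝ → ℝ) (m₁ m₂ m₃ α₁ α₂ α₃ : ℝ) :
    bayesDivergence σ ![m₁, m₂, m₃] ![α₁, α₂, α₃] =
      -(m₁ * σ (α₁ / m₁) + m₂ * σ (α₂ / m₂) + m₃ * σ (α₃ / m₃)) := by
  rw [bayesDivergence, Fin.sum_univ_three]
  rfl

end TwoEvents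

/-- Unique minimizer of a Bayesian divergence over the intersection of two
α-events on disjoint events `E₁` and `E₂`, together with the minimum value. -/
theorem stmt1 (n : ℕ) (hn : 3 ≤ n) (μ : Fin n → ℝ)
    (hμpos : ∀ i, 0 < μ i) (hμsum : ∑ i, μ i = 1)
    (σ : ℝ → ℝ) (hσconc : StrictConcaveOn ℝ (Set.Ici (0 : ℝ)) σ)
    (hσdiff : DifferentiableOn ℝ σ (Set.Ici (0 : ℝ))) (hσ1 : σ 1 = 0)
    (E₁ E₂ : Finset (Fin n)) (hE₁ : E₁.Nonempty) (hE₂ : E₂.Nonempty)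
    (hdisj : Disjoint E₁ E₂) (hunion : E₁ ∪ E₂ ≠ Finset.univ)
    (α₁ α₂ : ℝ) (hα₁ : α₁ ∈ Set.Ioo (0 : ℝ) 1) (hα₂ : α₂ ∈ Set.Ioo (0 : ℝ) 1)
    (hαsum : α₁ + α₂ < 1)
    (d : (Fin n → ℝ) → ℝ) (hd : ∀ π, d π = -∑ i, μ i * σ (π i / μ i))
    (C : Set (Fin n → ℝ))
    (hC : C = {π | (∀ i, 0 ≤ π i) ∧ (∑ i, π i = 1) ∧
      (∑ i ∈ E₁, π i = α₁) ∧ ∑ i ∈ E₂, π i = α₂})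
    (πstar : Fin n → ℝ)
    (hπstar : ∀ i, πstar i =
      if i ∈ E₁ then α₁ * μ i / (∑ j ∈ E₁, μ j)
      else if i ∈ E₂ then α₂ * μ i / (∑ j ∈ E₂, μ j)
      else (1 - α₁ - α₂) * μ i / (1 - ∑ j ∈ E₁ ∪ E₂, μ j)) :
    (πstar ∈ C ∧ ∀ π ∈ C, π ≠ πstar → d πstar < d π) ∧
    d πstar = -((∑ j ∈ E₁, μ j) * σ (α₁ / ∑ j ∈ E₁, μ j) +
      (∑ j ∈ E₂, μ j) * σ (α₂ / ∑ j ∈ E₂, μ j) +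
      (1 - ∑ j ∈ E₁ ∪ E₂, μ j) * σ ((1 - α₁ - α₂) / (1 - ∑ j ∈ E₁ ∪ E₂, μ j))) := by
  obtain rfl : d = bayesDivergence σ μ := funext hd
  have hα : ∀ k, 0 ≤ ![α₁, α₂, 1 - α₁ - α₂] k := by
    simpa [Fin.forall_fin_succ, sub_sub] using ⟨hα₁.1.le, hα₂.1.le, hαsum.le⟩
  have minimizer := stmt1_general hμpos hσconc (eventCell_surjective hE₁ hE₂ hdisj hunion) hα
  rwa [jeffreyUpdate_eventCell hdisj, prescribedMass_eventCell hdisj, cellMass_eventCell hdisj,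
    bayesDivergence_fin_three, hμsum, ← hC, ← funext hπstar] at minimizer
end

section
/- Let n ≥ 2, let μ ∈ Δ_n have full support, let m := min_j μ_j, and fix i₀ with μ_{i₀} = m. For each i ∈ {1,…,n} let d_i : [0,1] → ℝ be twice differentiable with d_i'' > 0. Assume that for every i ≠ i₀ and every α ∈ (0,1], the minimizer of t ↦ d_{i₀}(α−t) + d_i(t) over t ∈ [0,α] is t = α·μ_i/(μ_{i₀}+μ_i). Then there exists a strictly concave function σ : [0, 1/(2m)] → ℝ such that Σ_{i=1}^n d_i(π_i) = −Σ_{i=1}^n μ_i σ(π_i/μ_i) for every π ∈ Δ_n satisfying π_i ≤ μ_i/(μ_i + m) for all i. -/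
open Finset

/-
Optimality of the proportional split of `α = (m + p) c` between `f` and `g` gives the first-order
condition `g' (p c) = f' (m c)`. These are the derivatives in `c` of `(g (p c) - g 0) / p` and
`(f (m c) - f 0) / m`, so the two functions agree. Hence every `d i` is, up to the constant
`d i 0`, a rescaling of `d i₀`, and the constants are absorbed in proportion to the weights.
-/

lemma isMinOn_of_forall_ne_lt {α β : Type*} [Preorder β] {f : α → β} {s : Set α} {a : α}
    (h : ∀ x ∈ s, x ≠ a → f a < f x) : IsMinOn f s a := by
  intro x hx
  rcases eq_or_ne x a with rfl | hne
  · exact le_rfl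
  · exact (h x hx hne).le

lemma strictConvexOn_comp_linearMap {𝕜 E F β : Type*} [Semiring 𝕜] [PartialOrder 𝕜]
    [AddCommMonoid E] [AddCommMonoid F] [AddCommMonoid β] [PartialOrder β]
    [Module 𝕜 E] [Module 𝕜 F] [SMul 𝕜 β] {f : F → β} {s : Set F}
    (hf : StrictConvexOn 𝕜 s f) (g : E →ₗ[𝕜] F) (hg : Function.Injective g) :
    StrictConvexOn 𝕜 (g ⁻¹' s) (f ∘ g) :=
  ⟨hf.1.linear_preimage _, fun x hx y hy hxy a b ha hb hab ↦
    calc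
      f (g (a • x + b • y)) = f (a • g x + b • g y) := by rw [g.map_add, g.map_smul, g.map_smul]
      _ < a • f (g x) + b • f (g y) := hf.2 hx hy (hg.ne hxy) ha hb hab⟩

lemma strictConvexOn_const_smul {𝕜 E β : Type*} [CommSemiring 𝕜] [PartialOrder 𝕜]
    [AddCommMonoid E] [AddCommMonoid β] [PartialOrder β] [Module 𝕜 E] [Module 𝕜 β]
    [PosSMulStrictMono 𝕜 β] {f : E → β} {s : Set E} {c : 𝕜} (hc : 0 < c)
    (hf : StrictConvexOn 𝕜 s f) : StrictConvexOn 𝕜 s (c • f) :=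
  ⟨hf.1, fun x hx y hy hxy a b ha hb hab ↦
    calc
      c • f (a • x + b • y) < c • (a • f x + b • f y) :=
        smul_lt_smul_of_pos_left (hf.2 hx hy hxy ha hb hab) hc
      _ = a • c • f x + b • c • f y := by rw [smul_add, smul_comm c, smul_comm c]⟩

lemma strictConvexOn_of_hasDerivWithinAt2_pos {D : Set ℝ} (hD : Convex ℝ D) {f f' f'' : ℝ → ℝ}
    (hf : ContinuousOn f D)
    (hf' : ∀ x ∈ interior D, HasDerivWithinAt f (f' x) (interior D) x)
    (hf'' : ∀ x ∈ interior D, HasDerivWithinAt f' (f'' x) (interior D) x)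
    (hf''₀ : ∀ x ∈ interior D, 0 < f'' x) : StrictConvexOn ℝ D f := by
  have hmono : StrictMonoOn f' (interior D) :=
    strictMonoOn_of_hasDerivWithinAt_pos hD.interior
      (fun x hx ↦ (hf'' x hx).continuousWithinAt)
      (by rwa [interior_interior]) (by rwa [interior_interior])
  exact StrictMonoOn.strictConvexOn_of_deriv hD hf
    (hmono.congr (deriv_eqOn isOpen_interior hf').symm)

lemma sub_eq_sub_of_hasDerivAt_eq {f g f' : ℝ → ℝ} {a b : ℝ} (hab : a ≤ b)
    (hf : ContinuousOn f (Set.Icc a b)) (hf' : ∀ x ∈ Set.Ioo a b, HasDerivAt f (f' x) x)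
    (hg : ContinuousOn g (Set.Icc a b)) (hg' : ∀ x ∈ Set.Ioo a b, HasDerivAt g (f' x) x) :
    f b - f a = g b - g a := by
  rcases hab.eq_or_lt with rfl | hab
  · rw [sub_self, sub_self]
  obtain ⟨c, -, hc⟩ := exists_hasDerivAt_eq_slope (f - g) (fun x ↦ f' x - f' x) hab (hf.sub hg)
    fun x hx ↦ (hf' x hx).sub (hg' x hx)
  rw [sub_self, eq_div_iff (sub_pos.2 hab).ne'] at hc
  simp only [Pi.sub_apply] at hc
  linarith

lemma deriv_eq_of_isLocalMin_split {f g : ℝ → ℝ} {a t : ℝ}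
    (hf : DifferentiableAt ℝ f (a - t)) (hg : DifferentiableAt ℝ g t)
    (hmin : IsLocalMin (fun x ↦ f (a - x) + g x) t) : deriv g t = deriv f (a - t) := by
  have hzero := hmin.hasDerivAt_eq_zero
    ((hf.hasDerivAt.comp_const_sub a t).add hg.hasDerivAt)
  linarith

lemma sum_add_mul_eq_sum_mul_add_div {ι K : Type*} [Fintype ι] [Field K] {w : ι → K}
    (hw : ∑ i, w i ≠ 0) (c x : ι → K) :
    ∑ i, (c i + w i * x i) = ∑ i, w i * (x i + (∑ j, c j) / ∑ j, w j) := by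
  simp only [mul_add, sum_add_distrib]
  rw [← sum_mul, mul_div_cancel₀ _ hw, add_comm]

/-- The increment of `f` from `0` at scale `m`, per unit of `m`: the common generator of the
separable summands, up to sign and an additive constant. Only meant for `m ≠ 0`. -/
noncomputable def rescaledIncrement (f : ℝ → ℝ) (m s : ℝ) : ℝ := (f (m * s) - f 0) / m

lemma rescaledIncrement_zero (f : ℝ → ℝ) (m : ℝ) : rescaledIncrement f m 0 = 0 := by
  simp [rescaledIncrement]

lemma add_mul_rescaledIncrement_div (f : ℝ → ℝ) {m : ℝ} (hm : m ≠ 0) (x : ℝ) :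
    f 0 + m * rescaledIncrement f m (x / m) = f x := by
  rw [rescaledIncrement, mul_div_cancel₀ _ hm, mul_div_cancel₀ _ hm, add_sub_cancel]

lemma hasDerivAt_rescaledIncrement {f : ℝ → ℝ} {m s : ℝ} (hm : m ≠ 0)
    (hf : DifferentiableAt ℝ f (m * s)) :
    HasDerivAt (rescaledIncrement f m) (deriv f (m * s)) s := by
  have hcomp := ((hf.hasDerivAt.comp s (hasDerivAt_const_mul m)).sub_const (f 0)).div_const m
  rwa [mul_div_cancel_right₀ _ hm] at hcomp

lemma continuousOn_rescaledIncrement {f : ℝ → ℝ} {m b : ℝ} (hm : 0 ≤ m)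
    (hf : ContinuousOn f (Set.Icc 0 (m * b))) :
    ContinuousOn (rescaledIncrement f m) (Set.Icc 0 b) :=
  ((hf.comp (continuous_const_mul m).continuousOn fun _ hs ↦
    ⟨mul_nonneg hm hs.1, mul_le_mul_of_nonneg_left hs.2 hm⟩).sub continuousOn_const).div_const m

lemma strictConvexOn_rescaledIncrement {f : ℝ → ℝ} {m b : ℝ} (hm : 0 < m)
    (hf : StrictConvexOn ℝ (Set.Icc 0 b) f) :
    StrictConvexOn ℝ (Set.Icc 0 (b / m)) (rescaledIncrement f m) := by
  have hcomp := strictConvexOn_comp_linearMap hf (LinearMap.mulLeft ℝ m)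
    (mul_right_injective₀ hm.ne')
  have hscaled := strictConvexOn_const_smul (inv_pos.2 hm) (hcomp.add_const (-f 0))
  have hpreimage : LinearMap.mulLeft ℝ m ⁻¹' Set.Icc 0 b = Set.Icc 0 (b / m) :=
    (Set.preimage_const_mul_Icc₀ 0 b hm).trans (by rw [zero_div])
  rw [hpreimage] at hscaled
  exact hscaled.congr fun s _ ↦ by
    simp only [Pi.smul_apply, Pi.add_apply, Function.comp_apply, LinearMap.mulLeft_apply,
      smul_eq_mul, rescaledIncrement]
    ring

lemma rescaledIncrement_eq_of_isMinOn {f g : ℝ → ℝ} {m p s : ℝ} (hm : 0 < m) (hp : 0 < p)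
    (hs : 0 ≤ s) (hf : ContinuousOn f (Set.Icc 0 (m * s)))
    (hf' : DifferentiableOn ℝ f (Set.Ioo 0 (m * s))) (hg : ContinuousOn g (Set.Icc 0 (p * s)))
    (hg' : DifferentiableOn ℝ g (Set.Ioo 0 (p * s)))
    (hmin : ∀ c ∈ Set.Ioo 0 s,
      IsMinOn (fun t ↦ f ((m + p) * c - t) + g t) (Set.Icc 0 ((m + p) * c)) (p * c)) :
    rescaledIncrement g p s = rescaledIncrement f m s := by
  have hdiff {h : ℝ → ℝ} {q : ℝ} (hq : 0 < q) (hh : DifferentiableOn ℝ h (Set.Ioo 0 (q * s)))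
      {c : ℝ} (hc : c ∈ Set.Ioo 0 s) : DifferentiableAt ℝ h (q * c) :=
    hh.differentiableAt (Ioo_mem_nhds (mul_pos hq hc.1) (mul_lt_mul_of_pos_left hc.2 hq))
  have first_order : ∀ c ∈ Set.Ioo 0 s, deriv g (p * c) = deriv f (m * c) := by
    intro c hc
    have hsplit : (m + p) * c - p * c = m * c := by ring
    have hlt : p * c < (m + p) * c := by linarith [mul_pos hm hc.1]
    have hloc := (hmin c hc).isLocalMin (Icc_mem_nhds (mul_pos hp hc.1) hlt)
    have heq := deriv_eq_of_isLocalMin_split (hsplit ▸ hdiff hm hf' hc) (hdiff hp hg' hc) hloc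
    rwa [hsplit] at heq
  have hsub := sub_eq_sub_of_hasDerivAt_eq hs (continuousOn_rescaledIncrement hp.le hg)
    (fun c hc ↦ hasDerivAt_rescaledIncrement hp.ne' (hdiff hp hg' hc))
    (continuousOn_rescaledIncrement hm.le hf)
    (fun c hc ↦ first_order c hc ▸ hasDerivAt_rescaledIncrement hm.ne' (hdiff hm hf' hc))
  simpa only [rescaledIncrement_zero, sub_zero] using hsub

lemma rescaledIncrement_eq_of_isMinOn_proportional {f g : ℝ → ℝ} {m p A s : ℝ} (hm : 0 < m)
    (hp : 0 < p) (hf : ContinuousOn f (Set.Icc 0 A)) (hf' : DifferentiableOn ℝ f (Set.Ioo 0 A))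
    (hg : ContinuousOn g (Set.Icc 0 A)) (hg' : DifferentiableOn ℝ g (Set.Ioo 0 A))
    (hmin : ∀ α ∈ Set.Ioo 0 A,
      IsMinOn (fun t ↦ f (α - t) + g t) (Set.Icc 0 α) (α * p / (m + p)))
    (hs : s ∈ Set.Icc 0 (A / (m + p))) :
    rescaledIncrement g p s = rescaledIncrement f m s := by
  have hmp : 0 < m + p := add_pos hm hp
  have hsA : (m + p) * s ≤ A := (le_div_iff₀' hmp).1 hs.2
  have hmA : m * s ≤ A := by linarith [mul_nonneg hp.le hs.1]
  have hpA : p * s ≤ A := by linarith [mul_nonneg hm.le hs.1]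
  refine rescaledIncrement_eq_of_isMinOn hm hp hs.1
    (hf.mono (Set.Icc_subset_Icc_right hmA)) (hf'.mono (Set.Ioo_subset_Ioo_right hmA))
    (hg.mono (Set.Icc_subset_Icc_right hpA)) (hg'.mono (Set.Ioo_subset_Ioo_right hpA))
    fun c hc ↦ ?_
  have hc' := hmin ((m + p) * c)
    ⟨mul_pos hmp hc.1, (mul_lt_mul_of_pos_left hc.2 hmp).trans_le hsA⟩
  rwa [mul_assoc, mul_div_cancel_left₀ _ hmp.ne', mul_comm c p] at hc'

theorem stmt7_general {ι : Type*} [Fintype ι] {μ : ι → ℝ} (hμ : ∀ i, 0 < μ i) (i₀ : ι)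
    {d : ι → ℝ → ℝ} (hcont : ∀ i, ContinuousOn (d i) (Set.Icc 0 1))
    (hdiff : ∀ i, DifferentiableOn ℝ (d i) (Set.Ioo 0 1))
    (hconv : StrictConvexOn ℝ (Set.Icc 0 1) (d i₀))
    (hmin : ∀ i, i ≠ i₀ → ∀ α ∈ Set.Ioo (0 : ℝ) 1,
      IsMinOn (fun t ↦ d i₀ (α - t) + d i t) (Set.Icc 0 α) (α * μ i / (μ i₀ + μ i))) :
    ∃ σ : ℝ → ℝ, StrictConcaveOn ℝ (Set.Icc 0 (1 / μ i₀)) σ ∧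
      ∀ π : ι → ℝ, (∀ i, 0 ≤ π i) → (∀ i, π i ≤ μ i / (μ i + μ i₀)) →
        ∑ i, d i (π i) = -∑ i, μ i * σ (π i / μ i) := by
  set φ := rescaledIncrement (d i₀) (μ i₀)
  set C := (∑ i, d i 0) / ∑ i, μ i
  have hsum : ∑ i, μ i ≠ 0 := (sum_pos (fun i _ ↦ hμ i) ⟨i₀, mem_univ i₀⟩).ne'
  set σ : ℝ → ℝ := -(φ + fun _ ↦ C)
  refine ⟨σ, ((strictConvexOn_rescaledIncrement (hμ i₀) hconv).add_const C).neg,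
    fun π hπ₀ hπ ↦ ?_⟩
  have hφ (i : ι) : rescaledIncrement (d i) (μ i) (π i / μ i) = φ (π i / μ i) := by
    rcases eq_or_ne i i₀ with rfl | hi
    · rfl
    have hle : π i / μ i ≤ 1 / (μ i₀ + μ i) := by
      rw [div_le_iff₀ (hμ i), one_div_mul_eq_div, add_comm]
      exact hπ i
    exact rescaledIncrement_eq_of_isMinOn_proportional (hμ i₀) (hμ i) (hcont i₀) (hdiff i₀)
      (hcont i) (hdiff i) (hmin i hi) ⟨div_nonneg (hπ₀ i) (hμ i).le, hle⟩
  calc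
    ∑ i, d i (π i) = ∑ i, (d i 0 + μ i * φ (π i / μ i)) :=
      sum_congr rfl fun i _ ↦ by rw [← hφ, add_mul_rescaledIncrement_div (d i) (hμ i).ne']
    _ = ∑ i, μ i * (φ (π i / μ i) + C) := sum_add_mul_eq_sum_mul_add_div hsum _ _
    _ = -∑ i, μ i * σ (π i / μ i) := by
      simp only [σ, Pi.neg_apply, Pi.add_apply, mul_neg, sum_neg_distrib, neg_neg]

/-- an additively separable distance whose pairwise minimizers are the
proportional (Bayesian) posteriors must be a Bayesian divergence on the indicated region. -/
theorem stmt7 (n : ℕ) (hn : 2 ≤ n) (μ : Fin n → ℝ)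
    (hμpos : ∀ i, 0 < μ i) (hμsum : ∑ i, μ i = 1)
    (i₀ : Fin n) (hi₀ : ∀ j, μ i₀ ≤ μ j)
    (d d' d'' : Fin n → ℝ → ℝ)
    (hderiv1 : ∀ i, ∀ x ∈ Set.Icc (0 : ℝ) 1,
      HasDerivWithinAt (d i) (d' i x) (Set.Icc (0 : ℝ) 1) x)
    (hderiv2 : ∀ i, ∀ x ∈ Set.Icc (0 : ℝ) 1,
      HasDerivWithinAt (d' i) (d'' i x) (Set.Icc (0 : ℝ) 1) x)
    (hconv : ∀ i, ∀ x ∈ Set.Icc (0 : ℝ) 1, 0 < d'' i x)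
    (hmin : ∀ i, i ≠ i₀ → ∀ α : ℝ, 0 < α → α ≤ 1 →
      ∀ t ∈ Set.Icc (0 : ℝ) α, t ≠ α * μ i / (μ i₀ + μ i) →
        d i₀ (α - α * μ i / (μ i₀ + μ i)) + d i (α * μ i / (μ i₀ + μ i)) <
          d i₀ (α - t) + d i t) :
    ∃ σ : ℝ → ℝ, StrictConcaveOn ℝ (Set.Icc (0 : ℝ) (1 / (2 * μ i₀))) σ ∧
      ∀ π : Fin n → ℝ, (∀ i, 0 ≤ π i) → (∑ i, π i = 1) →
        (∀ i, π i ≤ μ i / (μ i + μ i₀)) →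
        ∑ i, d i (π i) = -∑ i, μ i * σ (π i / μ i) := by
  have hcont (i : Fin n) : ContinuousOn (d i) (Set.Icc 0 1) :=
    fun x hx ↦ (hderiv1 i x hx).continuousWithinAt
  have hdiff (i : Fin n) : DifferentiableOn ℝ (d i) (Set.Icc 0 1) :=
    fun x hx ↦ (hderiv1 i x hx).differentiableWithinAt
  have hstrict : StrictConvexOn ℝ (Set.Icc 0 1) (d i₀) :=
    strictConvexOn_of_hasDerivWithinAt2_pos (convex_Icc 0 1) (hcont i₀)
      (fun x hx ↦ (hderiv1 i₀ x (interior_subset hx)).mono interior_subset)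
      (fun x hx ↦ (hderiv2 i₀ x (interior_subset hx)).mono interior_subset)
      (fun x hx ↦ hconv i₀ x (interior_subset hx))
  obtain ⟨σ, hσ, hd⟩ := stmt7_general hμpos i₀ hcont
    (fun i ↦ (hdiff i).mono Set.Ioo_subset_Icc_self) hstrict
    (fun i hi α hα ↦ isMinOn_of_forall_ne_lt (hmin i hi α hα.1 hα.2.le))
  have hle : 1 / (2 * μ i₀) ≤ 1 / μ i₀ :=
    one_div_le_one_div_of_le (hμpos i₀) (by linarith [hμpos i₀])
  exact ⟨σ, hσ.subset (Set.Icc_subset_Icc_right hle) (convex_Icc _ _),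
    fun π hπ₀ _ hπ ↦ hd π hπ₀ hπ⟩
end
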